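/- arXiv:1704.04472 — 2 statements merged into one kernel-verified Lean document; each statement's English description precedes it below -/
import Mathlib

section
/- Let Σ be an alphabet of size σ ≥ 2, let n ≥ 2, let t ≥ 0, and for each m ∈ ℕ let M_m(t) = E[e^{t·(m − L(T))}] for T uniformly random in Σᵐ. Then M_n(t) ≤ 1 + σ^{-1}·e^{2t}·M_{n−2}(t) + Σ_{ℓ=2}^{⌊n/2⌋} (σ−1)·σ^{−ℓ−1}·e^{2tℓ}·M_{n−2ℓ}(t). -/
/-!
If `T` is unbordered then `L(T) = |T|` and it contributes at most `1`. Otherwise let `u` be its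
shortest border. Borders of borders are borders, so `u` is itself unbordered; hence the two
occurrences of `u` do not overlap and `T = u V u`. As `V` is a factor of `T`,
`|T| - L(T) ≤ 2|u| + (|V| - L(V))`, and `V` is arbitrary once `u` is fixed. The coefficient of
`M_{n-2ℓ}` is therefore at most `e^{2tℓ}` times the proportion of unbordered words among all words
of length `ℓ`, divided by `σ^ℓ`. For `ℓ ≥ 2` that proportion is at most `1 - 1/σ`, because the end
letters of `u` must differ.
-/

open Finset

/-- `S` has a border of length `ℓ`: `1 ≤ ℓ ≤ |S|` and the length-`ℓ` prefix of `S`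
equals its length-`ℓ` suffix. -/
def HasBorder {α : Type*} (S : List α) (ℓ : ℕ) : Prop :=
  1 ≤ ℓ ∧ ℓ ≤ S.length ∧ S.take ℓ = S.drop (S.length - ℓ)

/-- A string is unbordered if it has no proper border (no border of length `< |S|`). -/
def Unbordered {α : Type*} (S : List α) : Prop :=
  ∀ ℓ, ℓ < S.length → ¬ HasBorder S ℓ

/-- `maxUnb S` is `L(S)`: the maximum length of (nonempty) unbordered factors of `S`. -/
noncomputable def maxUnb {α : Type*} (S : List α) : ℕ :=
  sSup {k | ∃ T, T ≠ [] ∧ T <:+: S ∧ Unbordered T ∧ T.length = k}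

/-- `p > 0` is a period of `T` if `T[i] = T[i+p]` whenever both indices are valid. -/
def IsPeriod {α : Type*} (T : List α) (p : ℕ) : Prop :=
  0 < p ∧ ∀ (i : ℕ) (h : i + p < T.length),
    T[i]'(Nat.lt_of_le_of_lt (Nat.le_add_right i p) h) = T[i + p]'h

/-- `per T` is the shortest period of `T`. -/
noncomputable def per {α : Type*} (T : List α) : ℕ := sInf {p | IsPeriod T p}

/-- `borderF S` is `F(S)`: the length of the shortest border of `S`. -/
noncomputable def borderF {α : Type*} (S : List α) : ℕ := sInf {ℓ | HasBorder S ℓ}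

/-- `substr S i j` is the factor `S[i,j]` in 1-based closed-interval indexing. -/
def substr {α : Type*} (S : List α) (i j : ℕ) : List α := (S.drop (i - 1)).take (j + 1 - i)

section Borders

variable {α : Type*} {S V : List α} {k ℓ : ℕ}

theorem HasBorder.trans (hℓ : HasBorder S ℓ) (hk : HasBorder (S.take ℓ) k) : HasBorder S k := by
  obtain ⟨-, hℓS, hℓ⟩ := hℓ
  obtain ⟨hk_pos, hkℓ, hk⟩ := hk
  have hlen : (S.take ℓ).length = ℓ := List.length_take_of_le hℓS
  rw [hlen] at hkℓ hk
  refine ⟨hk_pos, hkℓ.trans hℓS, ?_⟩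
  calc S.take k = (S.take ℓ).take k := by rw [List.take_take, min_eq_left hkℓ]
    _ = (S.drop (S.length - ℓ)).drop (ℓ - k) := by rw [hk, hℓ]
    _ = S.drop (S.length - k) := by rw [List.drop_drop]; congr 1; omega

theorem HasBorder.hasBorder_take_overlap (h : HasBorder S ℓ) (hlong : S.length < 2 * ℓ) :
    HasBorder (S.take ℓ) (2 * ℓ - S.length) := by
  obtain ⟨-, hℓS, h⟩ := h
  have hlen : (S.take ℓ).length = ℓ := List.length_take_of_le hℓS
  refine ⟨by omega, by omega, ?_⟩
  calc (S.take ℓ).take (2 * ℓ - S.length)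
      = (S.drop (S.length - ℓ)).take (2 * ℓ - S.length) := by rw [h]
    _ = (S.take ℓ).drop (S.length - ℓ) := by rw [List.drop_take]; congr 1; omega
    _ = (S.take ℓ).drop ((S.take ℓ).length - (2 * ℓ - S.length)) := by congr 1; omega

theorem HasBorder.exists_eq_append (h : HasBorder S ℓ) (hshort : 2 * ℓ ≤ S.length) :
    ∃ V, S = S.take ℓ ++ V ++ S.take ℓ := by
  refine ⟨(S.drop ℓ).take (S.length - 2 * ℓ), ?_⟩
  have hsuffix : S.take ℓ = (S.drop ℓ).drop (S.length - 2 * ℓ) := by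
    rw [h.2.2, List.drop_drop]; congr 1; omega
  calc S = S.take ℓ ++ S.drop ℓ := (List.take_append_drop ℓ S).symm
    _ = S.take ℓ ++ ((S.drop ℓ).take (S.length - 2 * ℓ) ++
          (S.drop ℓ).drop (S.length - 2 * ℓ)) :=
      congrArg (S.take ℓ ++ ·) (List.take_append_drop _ _).symm
    _ = S.take ℓ ++ (S.drop ℓ).take (S.length - 2 * ℓ) ++ S.take ℓ := by
      rw [← hsuffix, List.append_assoc]

theorem HasBorder.hasBorder_borderF (h : HasBorder S ℓ) : HasBorder S (borderF S) :=
  Nat.sInf_mem (s := {ℓ | HasBorder S ℓ}) ⟨ℓ, h⟩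

theorem HasBorder.borderF_le (h : HasBorder S ℓ) : borderF S ≤ ℓ := Nat.sInf_le h

theorem HasBorder.unbordered_take_borderF (h : HasBorder S ℓ) :
    Unbordered (S.take (borderF S)) := by
  intro k hk hborder
  have hFk : borderF S ≤ k := (h.hasBorder_borderF.trans hborder).borderF_le
  have hkF : k < borderF S := hk.trans_le (List.length_take_le _ _)
  omega

theorem exists_unbordered_append_of_not_unbordered (h : ¬ Unbordered S) :
    ∃ u V, u ≠ [] ∧ Unbordered u ∧ S = u ++ V ++ u := by
  obtain ⟨ℓ, hℓS, hℓ⟩ : ∃ ℓ, ℓ < S.length ∧ HasBorder S ℓ := by simpa [Unbordered] using h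
  have hF : HasBorder S (borderF S) := hℓ.hasBorder_borderF
  have hFS : borderF S < S.length := hℓ.borderF_le.trans_lt hℓS
  have hlen : (S.take (borderF S)).length = borderF S := List.length_take_of_le hF.2.1
  have hunb := hℓ.unbordered_take_borderF
  have hshort : 2 * borderF S ≤ S.length := by
    by_contra! hlong
    exact hunb _ (by omega) (hF.hasBorder_take_overlap hlong)
  obtain ⟨V, hV⟩ := hF.exists_eq_append hshort
  refine ⟨S.take (borderF S), V, List.ne_nil_of_length_pos ?_, hunb, hV⟩
  exact hlen.symm ▸ hF.1

theorem hasBorder_append_take_one (hS : S ≠ []) : HasBorder (S ++ S.take 1) 1 := by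
  obtain ⟨a, S, rfl⟩ := List.exists_cons_of_ne_nil hS
  simp [HasBorder]

theorem bddAbove_length_unbordered_infix (S : List α) :
    BddAbove {k | ∃ T, T ≠ [] ∧ T <:+: S ∧ Unbordered T ∧ T.length = k} :=
  ⟨S.length, by rintro _ ⟨T, -, hTS, -, rfl⟩; exact hTS.length_le⟩

theorem Unbordered.length_le_maxUnb (h : Unbordered S) : S.length ≤ maxUnb S := by
  rcases eq_or_ne S [] with rfl | hS
  · exact Nat.zero_le _
  · exact le_csSup (bddAbove_length_unbordered_infix S) ⟨S, hS, List.infix_rfl, h, rfl⟩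

theorem maxUnb_le_of_infix (h : V <:+: S) : maxUnb V ≤ maxUnb S := by
  refine csSup_le_csSup' (bddAbove_length_unbordered_infix S) ?_
  rintro _ ⟨T, hT, hTV, hunb, rfl⟩
  exact ⟨T, hT, hTV.trans h, hunb, rfl⟩

end Borders

section ExpDefect

variable {α : Type*} {S V : List α} {t : ℝ}

/-- The quantity `e^{t(|S| - L(S))}` averaged by the moment generating function `M_n(t)`. -/
noncomputable def expDefect (t : ℝ) (S : List α) : ℝ :=
  Real.exp (t * ((S.length : ℝ) - (maxUnb S : ℝ)))

theorem expDefect_nonneg (t : ℝ) (S : List α) : 0 ≤ expDefect t S := (Real.exp_pos _).le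

theorem Unbordered.expDefect_le_one (h : Unbordered S) (ht : 0 ≤ t) : expDefect t S ≤ 1 := by
  have hlen : (S.length : ℝ) ≤ maxUnb S := by exact_mod_cast h.length_le_maxUnb
  exact Real.exp_le_one_iff.2 (mul_nonpos_of_nonneg_of_nonpos ht (sub_nonpos.2 hlen))

theorem expDefect_le_of_infix (h : V <:+: S) (ht : 0 ≤ t) :
    expDefect t S ≤ Real.exp (t * ((S.length : ℝ) - V.length)) * expDefect t V := by
  have hL : (maxUnb V : ℝ) ≤ maxUnb S := by exact_mod_cast maxUnb_le_of_infix h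
  rw [expDefect, expDefect, ← Real.exp_add, ← mul_add, Real.exp_le_exp]
  gcongr
  linarith

theorem expDefect_append_append_self_le (u V : List α) (ht : 0 ≤ t) :
    expDefect t (u ++ V ++ u) ≤ Real.exp (2 * t * u.length) * expDefect t V := by
  refine (expDefect_le_of_infix (List.infix_append u V u) ht).trans_eq ?_
  congr 2
  push_cast [List.length_append]
  ring

end ExpDefect

section Counting

variable (Γ : Type*) [Fintype Γ]

/-- The set `Γⁿ`, with words encoded as lists so that concatenation needs no index casts. -/
def words (n : ℕ) : Finset (List Γ) :=
  (univ : Finset (Fin n → Γ)).map ⟨List.ofFn, List.ofFn_injective⟩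

open scoped Classical in
/-- The unbordered words of length `n`, the possible shortest borders of longer words. -/
noncomputable def unborderedWords (n : ℕ) : Finset (List Γ) := {S ∈ words Γ n | Unbordered S}

variable {Γ} in
@[simp]
theorem mem_words {n : ℕ} {S : List Γ} : S ∈ words Γ n ↔ S.length = n := by
  constructor
  · intro hS
    obtain ⟨T, -, rfl⟩ := mem_map.1 hS
    exact List.length_ofFn
  · rintro rfl
    exact mem_map.2 ⟨S.get, mem_univ _, List.ofFn_get S⟩

variable {Γ} in
@[simp]
theorem mem_unborderedWords {n : ℕ} {S : List Γ} :
    S ∈ unborderedWords Γ n ↔ S.length = n ∧ Unbordered S := by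
  classical
  rw [unborderedWords, mem_filter, mem_words]

theorem unborderedWords_subset_words (n : ℕ) : unborderedWords Γ n ⊆ words Γ n :=
  fun _ hS => mem_words.2 (mem_unborderedWords.1 hS).1

@[simp]
theorem card_words (n : ℕ) : #(words Γ n) = Fintype.card Γ ^ n := by
  simp [words]

theorem card_unborderedWords_le (n : ℕ) : #(unborderedWords Γ n) ≤ Fintype.card Γ ^ n :=
  (card_le_card (unborderedWords_subset_words Γ n)).trans_eq (card_words Γ n)

/-- Appending to a nonempty word its own first letter yields a bordered word, and does so
injectively. -/
theorem card_unborderedWords_succ_add_le {n : ℕ} (hn : n ≠ 0) :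
    #(unborderedWords Γ (n + 1)) + Fintype.card Γ ^ n ≤ Fintype.card Γ ^ (n + 1) := by
  classical
  let close : List Γ → List Γ := fun v => v ++ v.take 1
  have hinj : Set.InjOn close (words Γ n) := fun v hv w hw h =>
    List.append_inj_left h ((mem_words.1 hv).trans (mem_words.1 hw).symm)
  have hdisj : Disjoint (unborderedWords Γ (n + 1)) ((words Γ n).image close) := by
    rw [disjoint_right]
    simp only [mem_image, mem_words]
    rintro _ ⟨v, rfl, rfl⟩ hunb
    obtain ⟨hlen, hunb⟩ := mem_unborderedWords.1 hunb
    exact hunb 1 (by omega) (hasBorder_append_take_one (List.ne_nil_of_length_pos (by omega)))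
  have hsub : unborderedWords Γ (n + 1) ∪ (words Γ n).image close ⊆ words Γ (n + 1) := by
    refine union_subset (unborderedWords_subset_words Γ _) ?_
    simp only [image_subset_iff, mem_words]
    rintro v rfl
    simp only [close, List.length_append, List.length_take]
    omega
  calc #(unborderedWords Γ (n + 1)) + Fintype.card Γ ^ n
      = #(unborderedWords Γ (n + 1) ∪ (words Γ n).image close) := by
        rw [card_union_of_disjoint hdisj, card_image_of_injOn hinj, card_words]
    _ ≤ Fintype.card Γ ^ (n + 1) := (card_le_card hsub).trans_eq (card_words Γ _)

open scoped Classical in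
theorem sum_not_unbordered_le {R : Type*} [AddCommMonoid R] [PartialOrder R] [IsOrderedAddMonoid R]
    (n : ℕ) {w : List Γ → R} (hw : ∀ S, 0 ≤ w S) :
    ∑ S ∈ words Γ n with ¬ Unbordered S, w S ≤
      ∑ ℓ ∈ Icc 1 (n / 2), ∑ u ∈ unborderedWords Γ ℓ, ∑ V ∈ words Γ (n - 2 * ℓ),
        w (u ++ V ++ u) := by
  let decompositions : Finset (Σ _ : ℕ, List Γ × List Γ) :=
    (Icc 1 (n / 2)).sigma fun ℓ => unborderedWords Γ ℓ ×ˢ words Γ (n - 2 * ℓ)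
  let recompose : (Σ _ : ℕ, List Γ × List Γ) → List Γ := fun d => d.2.1 ++ d.2.2 ++ d.2.1
  have hcover : {S ∈ words Γ n | ¬ Unbordered S} ⊆ decompositions.image recompose := by
    intro S hS
    obtain ⟨hSn, hS⟩ := mem_filter.1 hS
    obtain ⟨u, V, hu, hunb, rfl⟩ := exists_unbordered_append_of_not_unbordered hS
    have hu_pos := List.length_pos_iff.2 hu
    simp only [mem_words, List.length_append] at hSn
    refine mem_image.2 ⟨⟨u.length, u, V⟩, ?_, rfl⟩
    simp only [decompositions, mem_sigma, mem_Icc, mem_product, mem_unborderedWords, mem_words]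
    exact ⟨by omega, ⟨trivial, hunb⟩, by omega⟩
  calc ∑ S ∈ words Γ n with ¬ Unbordered S, w S
      ≤ ∑ S ∈ decompositions.image recompose, w S :=
        sum_le_sum_of_subset_of_nonneg hcover fun S _ _ => hw S
    _ ≤ ∑ d ∈ decompositions, w (recompose d) := sum_image_le_of_nonneg fun S _ => hw S
    _ = _ := by simp only [decompositions, recompose, sum_sigma, sum_product]

theorem sum_expDefect_words_le (n : ℕ) {t : ℝ} (ht : 0 ≤ t) :
    ∑ S ∈ words Γ n, expDefect t S ≤
      (Fintype.card Γ : ℝ) ^ n + ∑ ℓ ∈ Icc 1 (n / 2), (#(unborderedWords Γ ℓ) : ℝ) *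
        (Real.exp (2 * t * ℓ) * ∑ V ∈ words Γ (n - 2 * ℓ), expDefect t V) := by
  classical
  rw [← sum_filter_add_sum_filter_not (words Γ n) Unbordered]
  refine add_le_add ?_ ((sum_not_unbordered_le Γ n (expDefect_nonneg t)).trans ?_)
  · calc ∑ S ∈ words Γ n with Unbordered S, expDefect t S
        ≤ #(unborderedWords Γ n) • (1 : ℝ) :=
          sum_le_card_nsmul _ _ _ fun S hS => (mem_filter.1 hS).2.expDefect_le_one ht
      _ ≤ (Fintype.card Γ : ℝ) ^ n := by
          rw [nsmul_one]
          exact_mod_cast card_unborderedWords_le Γ n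
  · refine sum_le_sum fun ℓ _ => ?_
    rw [← nsmul_eq_mul]
    refine sum_le_card_nsmul _ _ _ fun u hu => ?_
    rw [mul_sum, ← (mem_unborderedWords.1 hu).1]
    exact sum_le_sum fun V _ => expDefect_append_append_self_le u V ht

end Counting

section Expectation

variable (Γ : Type*) [Fintype Γ]

/-- The moment generating function `M_n(t) = E[e^{t(n - L(S))}]` for `S` uniform in `Γⁿ`. -/
noncomputable def defectMgf (t : ℝ) (n : ℕ) : ℝ :=
  (∑ S ∈ words Γ n, expDefect t S) / (Fintype.card Γ : ℝ) ^ n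

theorem defectMgf_eq_sum_ofFn (t : ℝ) (n : ℕ) :
    defectMgf Γ t n =
      (∑ T : Fin n → Γ, Real.exp (t * ((n : ℝ) - (maxUnb (List.ofFn T) : ℝ)))) /
        (Fintype.card Γ : ℝ) ^ n := by
  simp [defectMgf, words, expDefect]

theorem defectMgf_nonneg (t : ℝ) (n : ℕ) : 0 ≤ defectMgf Γ t n :=
  div_nonneg (sum_nonneg fun S _ => expDefect_nonneg t S) (by positivity)

theorem defectMgf_le [Nonempty Γ] (n : ℕ) {t : ℝ} (ht : 0 ≤ t) :
    defectMgf Γ t n ≤ 1 + ∑ ℓ ∈ Icc 1 (n / 2),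
      (#(unborderedWords Γ ℓ) : ℝ) / (Fintype.card Γ : ℝ) ^ (2 * ℓ) *
        Real.exp (2 * t * ℓ) * defectMgf Γ t (n - 2 * ℓ) := by
  have hcard : (0 : ℝ) < Fintype.card Γ := by exact_mod_cast Fintype.card_pos
  rw [defectMgf, div_le_iff₀ (pow_pos hcard n), add_mul, one_mul, sum_mul]
  refine (sum_expDefect_words_le Γ n ht).trans_eq (congrArg _ (sum_congr rfl fun ℓ hℓ => ?_))
  have hpow : (Fintype.card Γ : ℝ) ^ n =
      (Fintype.card Γ : ℝ) ^ (2 * ℓ) * (Fintype.card Γ : ℝ) ^ (n - 2 * ℓ) := by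
    rw [← pow_add, Nat.add_sub_of_le (by have := (mem_Icc.1 hℓ).2; omega)]
  rw [defectMgf, hpow]
  field_simp

theorem card_unborderedWords_one_div_le :
    (#(unborderedWords Γ 1) : ℝ) / (Fintype.card Γ : ℝ) ^ 2 ≤ (Fintype.card Γ : ℝ)⁻¹ := by
  have h : (#(unborderedWords Γ 1) : ℝ) ≤ Fintype.card Γ := by
    exact_mod_cast (card_unborderedWords_le Γ 1).trans_eq (pow_one _)
  refine (div_le_div_of_nonneg_right h (by positivity)).trans_eq ?_
  rw [sq, div_self_mul_self']

theorem card_unborderedWords_div_le [Nonempty Γ] {ℓ : ℕ} (hℓ : 2 ≤ ℓ) :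
    (#(unborderedWords Γ ℓ) : ℝ) / (Fintype.card Γ : ℝ) ^ (2 * ℓ) ≤
      ((Fintype.card Γ : ℝ) - 1) * (Fintype.card Γ : ℝ) ^ (-(ℓ : ℤ) - 1) := by
  have hcard : (0 : ℝ) < Fintype.card Γ := by exact_mod_cast Fintype.card_pos
  obtain ⟨k, rfl⟩ := Nat.exists_eq_add_of_le' (one_le_two.trans hℓ)
  have hcount : (#(unborderedWords Γ (k + 1)) : ℝ) + (Fintype.card Γ : ℝ) ^ k ≤
      (Fintype.card Γ : ℝ) ^ (k + 1) := by
    exact_mod_cast card_unborderedWords_succ_add_le Γ (by omega : k ≠ 0)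
  have hpow : (Fintype.card Γ : ℝ) ^ (-((k + 1 : ℕ) : ℤ) - 1) *
      (Fintype.card Γ : ℝ) ^ (2 * (k + 1)) = (Fintype.card Γ : ℝ) ^ k := by
    rw [← zpow_natCast, ← zpow_natCast, ← zpow_add₀ hcard.ne']
    congr 1
    push_cast
    ring
  rw [div_le_iff₀ (by positivity), mul_assoc, hpow]
  linarith [pow_succ (Fintype.card Γ : ℝ) k]

end Expectation

/-- with `M_m(t) = E[e^{t(m - L(T))}]` for uniformly random `T ∈ Σᵐ`, for
`σ ≥ 2`, `n ≥ 2` and `t ≥ 0` the recurrence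
`M_n ≤ 1 + σ⁻¹e^{2t}M_{n-2} + Σ_{ℓ=2}^{⌊n/2⌋}(σ-1)σ^{-ℓ-1}e^{2tℓ}M_{n-2ℓ}` holds. -/
theorem mgf_recurrence (σ : ℕ) (hσ : 2 ≤ σ) (Γ : Type) [Fintype Γ]
    (hcard : Fintype.card Γ = σ) (n : ℕ) (hn : 2 ≤ n) (t : ℝ) (ht : 0 ≤ t)
    (M : ℕ → ℝ)
    (hM : ∀ m : ℕ, M m =
      (∑ T : Fin m → Γ, Real.exp (t * ((m : ℝ) - (maxUnb (List.ofFn T) : ℝ)))) / (σ : ℝ) ^ m) :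
    M n ≤ 1 + (σ : ℝ)⁻¹ * Real.exp (2 * t) * M (n - 2) +
      ∑ ℓ ∈ Finset.Icc 2 (n / 2),
        ((σ : ℝ) - 1) * (σ : ℝ) ^ (-(ℓ : ℤ) - 1) * Real.exp (2 * t * ℓ) * M (n - 2 * ℓ) := by
  subst hcard
  have : Nonempty Γ := Fintype.card_pos_iff.1 (by omega)
  obtain rfl : M = defectMgf Γ t := funext fun m => (hM m).trans (defectMgf_eq_sum_ofFn Γ t m).symm
  have hsplit : Icc 1 (n / 2) = insert 1 (Icc 2 (n / 2)) :=
    (insert_Icc_add_one_left_eq_Icc (by omega)).symm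
  refine (defectMgf_le Γ n ht).trans ?_
  rw [hsplit, sum_insert (by simp), ← add_assoc]
  simp only [Nat.cast_one, mul_one]
  gcongr with ℓ hℓ
  · exact defectMgf_nonneg Γ t _
  · exact card_unborderedWords_one_div_le Γ
  · exact defectMgf_nonneg Γ t _
  · exact card_unborderedWords_div_le Γ (mem_Icc.1 hℓ).1
end

section
/- Let Σ be a finite alphabet, S ∈ Σⁿ with n ≥ 1, and let $ be a symbol not in Σ. Set k = n − L(S) and define S_$ = S[1,k]·$·S[L(S)+1,n], a string of length 2k+1 over Σ ∪ {$}. Then: (i) for every ℓ ≤ k, S has a border of length ℓ if and only if S_$ has a border of length ℓ; (ii) S_$ has no proper border of length greater than k; and consequently (iii) |S| − per(S) = |S_$| − per(S_$). -/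
open Finset

/-!
A proper border of length `ℓ` of `T` is the same thing as a period `|T| - ℓ`, so `|T| - per T` is
the length of the longest proper border of `T`. A factor inherits the periods of the whole string,
and an unbordered string has no period shorter than itself; hence `L(S) ≤ p` for every period `p`
of `S`, that is, every proper border of `S` has length at most `k = |S| - L(S)`.

The string `S_$` keeps the prefix and the suffix of `S` of length `k`, so both strings have the same
borders of length at most `k`. A proper border of `S_$` longer than `k` would align the sentinel
with a symbol to its right, which is impossible. So `S` and `S_$` have the same proper borders.
-/

section

variable {α β : Type*} {S T U V : List α} {p k ℓ : ℕ}

theorem isPeriod_iff_take_eq_drop :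
    IsPeriod T p ↔ 0 < p ∧ T.take (T.length - p) = T.drop p := by
  simp only [IsPeriod, List.ext_getElem_iff, List.length_take, List.length_drop,
    List.getElem_take, List.getElem_drop, Nat.add_comm p]
  grind

theorem isPeriod_of_length_le (hp : 0 < p) (h : T.length ≤ p) : IsPeriod T p :=
  ⟨hp, fun _ hi => by omega⟩

theorem IsPeriod.of_infix (hS : IsPeriod S p) (hTS : T <:+: S) : IsPeriod T p := by
  obtain ⟨d, hd, hshift⟩ := List.infix_iff_getElem?.1 hTS
  refine ⟨hS.1, fun i hi => ?_⟩
  have hperiod : S[i + d]? = S[i + p + d]? := by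
    have h := hS.2 (i + d) (by omega)
    grind
  rw [hshift i (by omega), hshift (i + p) hi] at hperiod
  exact Option.some.inj hperiod

theorem isPeriod_map {f : α → β} (hf : f.Injective) : IsPeriod (T.map f) p ↔ IsPeriod T p := by
  simp only [IsPeriod, List.length_map, List.getElem_map, hf.eq_iff]

theorem isPeriod_per (T : List α) : IsPeriod T (per T) :=
  Nat.sInf_mem (s := {p | IsPeriod T p})
    ⟨T.length + 1, isPeriod_of_length_le (Nat.succ_pos _) (Nat.le_succ _)⟩

theorem per_le (h : IsPeriod T p) : per T ≤ p :=
  Nat.sInf_le h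

theorem per_map {f : α → β} (hf : f.Injective) (T : List α) : per (T.map f) = per T := by
  simp only [per, isPeriod_map hf]

theorem hasBorder_map {f : α → β} (hf : f.Injective) :
    HasBorder (T.map f) ℓ ↔ HasBorder T ℓ := by
  simp only [HasBorder, List.length_map, ← List.map_take, ← List.map_drop,
    (List.map_injective_iff.2 hf).eq_iff]

theorem hasBorder_length_sub_iff_isPeriod (hp : 0 < p) (hlt : p < T.length) :
    HasBorder T (T.length - p) ↔ IsPeriod T p := by
  rw [isPeriod_iff_take_eq_drop, HasBorder, Nat.sub_sub_self hlt.le]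
  grind

theorem HasBorder.isPeriod (h : HasBorder T ℓ) (hlt : ℓ < T.length) :
    IsPeriod T (T.length - ℓ) := by
  have hpos := h.1
  rwa [← hasBorder_length_sub_iff_isPeriod (by omega) (by omega), Nat.sub_sub_self hlt.le]

theorem length_sub_per_eq_sSup (T : List α) :
    T.length - per T = sSup {ℓ | ℓ < T.length ∧ HasBorder T ℓ} := by
  apply le_antisymm
  · obtain hle | hlt := le_or_gt T.length (per T)
    · simp only [Nat.sub_eq_zero_of_le hle, zero_le]
    · have hper := isPeriod_per T
      have hborder := (hasBorder_length_sub_iff_isPeriod hper.1 hlt).2 hper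
      exact le_csSup ⟨T.length, fun _ h => h.1.le⟩ ⟨Nat.sub_lt_self hper.1 hlt.le, hborder⟩
  · refine csSup_le' ?_
    rintro ℓ ⟨hlt, hborder⟩
    have hper := per_le (hborder.isPeriod hlt)
    omega

theorem Unbordered.length_le_of_isPeriod (hT : Unbordered T) (hp : IsPeriod T p) :
    T.length ≤ p := by
  by_contra! hlt
  exact hT _ (Nat.sub_lt_self hp.1 hlt.le) ((hasBorder_length_sub_iff_isPeriod hp.1 hlt).2 hp)

theorem unbordered_singleton (a : α) : Unbordered [a] :=
  fun _ hlt hborder => absurd hborder.1 hlt.not_ge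

theorem Unbordered.length_le_maxUnb_s15 (hT : Unbordered T) (hne : T ≠ []) (hTS : T <:+: S) :
    T.length ≤ maxUnb S := by
  refine le_csSup ⟨S.length, ?_⟩ ⟨T, hne, hTS, hT, rfl⟩
  rintro _ ⟨T', -, hT'S, -, rfl⟩
  exact hT'S.length_le

theorem maxUnb_le_length (S : List α) : maxUnb S ≤ S.length := by
  refine csSup_le' ?_
  rintro _ ⟨T, -, hTS, -, rfl⟩
  exact hTS.length_le

theorem maxUnb_pos (hS : S ≠ []) : 0 < maxUnb S := by
  obtain ⟨a, ha⟩ := List.exists_mem_of_ne_nil S hS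
  exact (unbordered_singleton a).length_le_maxUnb_s15 (List.cons_ne_nil a [])
    ((List.singleton_infix_iff a S).2 ha)

theorem IsPeriod.maxUnb_le (hp : IsPeriod S p) : maxUnb S ≤ p := by
  refine csSup_le' ?_
  rintro _ ⟨T, -, hTS, hT, rfl⟩
  exact hT.length_le_of_isPeriod (hp.of_infix hTS)

theorem HasBorder.le_length_sub_maxUnb (h : HasBorder S ℓ) (hlt : ℓ < S.length) :
    ℓ ≤ S.length - maxUnb S := by
  have hL := (h.isPeriod hlt).maxUnb_le
  omega

theorem hasBorder_congr_of_le (hS : k ≤ S.length) (hT : k ≤ T.length)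
    (hprefix : S.take k = T.take k)
    (hsuffix : S.drop (S.length - k) = T.drop (T.length - k)) (hℓ : ℓ ≤ k) :
    HasBorder S ℓ ↔ HasBorder T ℓ := by
  have take_eq (R : List α) : R.take ℓ = (R.take k).take ℓ := by
    rw [List.take_take, Nat.min_eq_left hℓ]
  have drop_eq (R : List α) (hR : k ≤ R.length) :
      R.drop (R.length - ℓ) = (R.drop (R.length - k)).drop (k - ℓ) := by
    rw [List.drop_drop]
    congr 1
    omega
  simp only [HasBorder, take_eq S, take_eq T, drop_eq S hS, drop_eq T hT, hprefix, hsuffix,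
    hℓ.trans hS, hℓ.trans hT]

theorem not_hasBorder_append_singleton_append {a : α} (ha : a ∉ V) (hU : U.length < ℓ)
    (hlt : ℓ < (U ++ [a] ++ V).length) : ¬ HasBorder (U ++ [a] ++ V) ℓ := by
  intro hborder
  have hperiod := (hborder.isPeriod hlt).2 U.length (by omega)
  have hsentinel : (U ++ [a] ++ V)[U.length]'(by omega) = a := by grind
  have hright : (U ++ [a] ++ V)[U.length + ((U ++ [a] ++ V).length - ℓ)]'(by omega) ∈ V := by
    rw [List.getElem_append_right (by rw [List.length_append, List.length_singleton]; omega)]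
    exact List.getElem_mem _
  rw [← hperiod, hsentinel] at hright
  exact ha hright

/-- The string `S_$` for a sentinel `a` and an arbitrary block length `k` in place of
`|S| - L(S)`: the prefix and the suffix of `S` of length `k`, separated by `a`. The two blocks may
overlap in `S`. -/
def withSentinel (a : α) (k : ℕ) (S : List α) : List α :=
  S.take k ++ [a] ++ S.drop (S.length - k)

theorem length_withSentinel (a : α) (hk : k ≤ S.length) :
    (withSentinel a k S).length = 2 * k + 1 := by
  simp only [withSentinel, List.length_append, List.length_take, List.length_drop,
    List.length_singleton]
  omega

theorem hasBorder_withSentinel_iff (a : α) (hk : k ≤ S.length) (hℓ : ℓ ≤ k) :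
    HasBorder (withSentinel a k S) ℓ ↔ HasBorder S ℓ := by
  have hlen := length_withSentinel a hk
  refine hasBorder_congr_of_le (by omega) hk ?_ ?_ hℓ
  · rw [withSentinel, List.append_assoc, List.take_left' (List.length_take_of_le hk)]
  · rw [hlen, withSentinel, List.drop_left' (by grind)]

theorem not_hasBorder_withSentinel {a : α} (ha : a ∉ S) (hkℓ : k < ℓ)
    (hlt : ℓ < (withSentinel a k S).length) : ¬ HasBorder (withSentinel a k S) ℓ :=
  not_hasBorder_append_singleton_append (mt List.mem_of_mem_drop ha)
    ((List.length_take_le k S).trans_lt hkℓ) hlt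

theorem length_withSentinel_sub_per {a : α} (ha : a ∉ S) (hk : k < S.length)
    (hborders : ∀ ℓ < S.length, HasBorder S ℓ → ℓ ≤ k) :
    (withSentinel a k S).length - per (withSentinel a k S) = S.length - per S := by
  have hlen := length_withSentinel a hk.le
  rw [length_sub_per_eq_sSup, length_sub_per_eq_sSup]
  congr 1
  ext ℓ
  constructor
  · rintro ⟨hlt, hborder⟩
    have hℓ : ℓ ≤ k := not_lt.1 fun hkℓ => not_hasBorder_withSentinel ha hkℓ hlt hborder
    exact ⟨hℓ.trans_lt hk, (hasBorder_withSentinel_iff a hk.le hℓ).1 hborder⟩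
  · rintro ⟨hlt, hborder⟩
    have hℓ : ℓ ≤ k := hborders ℓ hlt hborder
    exact ⟨by omega, (hasBorder_withSentinel_iff a hk.le hℓ).2 hborder⟩

end

/-- let `S ∈ Σⁿ` with `n ≥ 1`, `k = n - L(S)`, and let
`S_$ = S[1,k]·$·S[L(S)+1,n]` where `$ ∉ Σ` is a sentinel (modelled by `none` in `Option Σ`).
Then `S_$` has length `2k + 1`; for every `ℓ ≤ k`, `S` has a border of length `ℓ` iff `S_$` does;
`S_$` has no proper border of length `> k`; and `|S| - per(S) = |S_$| - per(S_$)`. -/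
theorem sentinel_reduction (Γ : Type) (S : List Γ) (hS : 1 ≤ S.length)
    (k : ℕ) (hk : k = S.length - maxUnb S)
    (Sd : List (Option Γ))
    (hSd : Sd = (S.take k).map some ++ [none] ++ (S.drop (maxUnb S)).map some) :
    Sd.length = 2 * k + 1 ∧
    (∀ ℓ : ℕ, ℓ ≤ k → (HasBorder S ℓ ↔ HasBorder Sd ℓ)) ∧
    (∀ ℓ : ℕ, k < ℓ → ℓ < Sd.length → ¬ HasBorder Sd ℓ) ∧
    S.length - per S = Sd.length - per Sd := by
  have hL := maxUnb_le_length S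
  have hLpos := maxUnb_pos (List.ne_nil_of_length_pos hS)
  have hinj := Option.some_injective Γ
  have hklt : k < (S.map some).length := by rw [List.length_map]; omega
  have hnone : none ∉ S.map some := by simp
  obtain rfl : Sd = withSentinel none k (S.map some) := by
    rw [hSd, withSentinel, List.map_take, List.map_drop, List.length_map, hk,
      Nat.sub_sub_self hL]
  refine ⟨length_withSentinel none hklt.le, fun ℓ hℓ => ?_,
    fun ℓ => not_hasBorder_withSentinel hnone, ?_⟩
  · rw [hasBorder_withSentinel_iff none hklt.le hℓ, hasBorder_map hinj]
  · rw [length_withSentinel_sub_per hnone hklt, List.length_map, per_map hinj]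
    intro ℓ hlt hborder
    rw [List.length_map] at hlt
    exact hk ▸ ((hasBorder_map hinj).1 hborder).le_length_sub_maxUnb hlt
end
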